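/- arXiv:math/0007057 — 2 statements merged into one kernel-verified Lean document; each statement's English description precedes it below -/
import Mathlib

section
/- Let ψ : ℂ → ℝ be a bounded continuous function that is weakly subharmonic, in the sense that ∫_ℂ ψ(z)·Δφ(z) dλ(z) ≥ 0 for every smooth compactly supported function φ : ℂ → ℝ with φ ≥ 0. Then ψ is constant. (This is Lemma 5 of the paper: any bounded weakly subharmonic function in the two-dimensional plane is a constant.) -/
open MeasureTheory

/-- The Euclidean Laplacian of a function `φ : ℂ → ℝ`, computed as the sum of the
second derivatives in the directions `1` and `I` (identifying `ℂ` with `ℝ²`). -/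
noncomputable def laplacianC (φ : ℂ → ℝ) (z : ℂ) : ℝ :=
  fderiv ℝ (fun w => fderiv ℝ φ w 1) z 1 +
    fderiv ℝ (fun w => fderiv ℝ φ w Complex.I) z Complex.I

/-
Mollifying `ψ` reduces the claim to `C²` functions `u` with `0 ≤ Δ u`, since the Laplacian of a
mollification is the integral of `ψ` against the Laplacian of a reflected, translated mollifier. For
such `u`, fix a centre `z₀` and compare `u` outside a small disc `‖z - z₀‖ < r` with the harmonic
function `ε log (‖z - z₀‖ / r)`: it dominates the bounded `u` far away, so the maximum principle
bounds `u` by its maximum over `‖z - z₀‖ = r` plus this function. Letting `ε → 0` and then `r → 0`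
gives `u ≤ u z₀`. This is where dimension two enters: the fundamental solution `log` is unbounded at
infinity.
-/

open Filter Topology Metric Laplacian InnerProductSpace ContinuousLinearMap
open scoped Convolution ContDiff

section MaximumPrinciple

lemma deriv_deriv_nonpos_of_isLocalMax {f : ℝ → ℝ} {x : ℝ} (hf : ContinuousAt f x)
    (hmax : IsLocalMax f x) : deriv (deriv f) x ≤ 0 := by
  by_contra! hpos
  have hmin : IsLocalMin f x := isLocalMin_of_deriv_deriv_pos hpos hmax.deriv_eq_zero hf
  have hconst : f =ᶠ[𝓝 x] fun _ ↦ f x :=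
    (hmax.and hmin).mono fun _ h ↦ le_antisymm h.1 h.2
  simp [hconst.deriv.deriv_eq] at hpos

lemma fderiv_fderiv_apply_const {𝕜 E F : Type*} [NontriviallyNormedField 𝕜]
    [NormedAddCommGroup E] [NormedSpace 𝕜 E] [NormedAddCommGroup F] [NormedSpace 𝕜 F] {f : E → F}
    {x : E} (hf : DifferentiableAt 𝕜 (fderiv 𝕜 f) x) (v w : E) :
    fderiv 𝕜 (fun y ↦ fderiv 𝕜 f y v) x w = fderiv 𝕜 (fderiv 𝕜 f) x w v := by
  simp [fderiv_clm_apply hf (differentiableAt_const v)]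

lemma deriv_deriv_comp_add_smul {E F : Type*} [NormedAddCommGroup E] [NormedSpace ℝ E]
    [NormedAddCommGroup F] [NormedSpace ℝ F] {f : E → F} {x : E} (hf : ContDiffAt ℝ 2 f x)
    (v : E) : deriv (deriv fun t : ℝ ↦ f (x + t • v)) 0 = fderiv ℝ (fderiv ℝ f) x v v := by
  have hline (t : ℝ) : HasDerivAt (fun t : ℝ ↦ x + t • v) v t := by
    simpa using ((hasDerivAt_id t).smul_const v).const_add x
  have hline_zero : x = x + (0 : ℝ) • v := by simp
  have hline_tendsto : Tendsto (fun t : ℝ ↦ x + t • v) (𝓝 0) (𝓝 x) := by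
    simpa using (hline 0).continuousAt.tendsto
  have hderiv : deriv (fun t : ℝ ↦ f (x + t • v)) =ᶠ[𝓝 0] fun t ↦ fderiv ℝ f (x + t • v) v :=
    (hline_tendsto.eventually (hf.eventually (by simp))).mono fun t ht ↦
      ((ht.differentiableAt (by norm_num)).hasFDerivAt.comp_hasDerivAt t (hline t)).deriv
  have hf' : DifferentiableAt ℝ (fderiv ℝ f) x :=
    (hf.fderiv_right (m := 1) le_rfl).differentiableAt one_ne_zero
  have hfv : DifferentiableAt ℝ (fun y ↦ fderiv ℝ f y v) x :=
    hf'.clm_apply (differentiableAt_const v)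
  rw [hderiv.deriv_eq, ← fderiv_fderiv_apply_const hf']
  exact (hfv.hasFDerivAt.comp_hasDerivAt_of_eq 0 (hline 0) hline_zero).deriv

variable {E : Type*} [NormedAddCommGroup E] [InnerProductSpace ℝ E] [FiniteDimensional ℝ E]

lemma laplacian_eq_sum_fderiv_fderiv {F ι : Type*} [NormedAddCommGroup F] [NormedSpace ℝ F]
    [Fintype ι] (b : OrthonormalBasis ι ℝ E) (f : E → F) (x : E) :
    Δ f x = ∑ i, fderiv ℝ (fderiv ℝ f) x (b i) (b i) := by
  simp [laplacian_eq_iteratedFDeriv_orthonormalBasis f b, iteratedFDeriv_two_apply]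

lemma laplacian_nonpos_of_isLocalMax {f : E → ℝ} {x : E} (hf : ContDiffAt ℝ 2 f x)
    (hmax : IsLocalMax f x) : Δ f x ≤ 0 := by
  rw [laplacian_eq_sum_fderiv_fderiv (stdOrthonormalBasis ℝ E)]
  refine Finset.sum_nonpos fun i _ ↦ ?_
  rw [← deriv_deriv_comp_add_smul hf]
  set v := stdOrthonormalBasis ℝ E i
  have hline : ContinuousAt (fun t : ℝ ↦ x + t • v) 0 := by fun_prop
  have hx : x + (0 : ℝ) • v = x := by simp
  refine deriv_deriv_nonpos_of_isLocalMax ?_ ?_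
  · exact ContinuousAt.comp (g := f) (by simpa using hf.continuousAt) hline
  · exact IsMaxFilter.comp_tendsto (g := fun t : ℝ ↦ x + t • v) (by rwa [hx])
      (by simpa using hline.tendsto)

lemma laplacian_norm_sq (x : E) : Δ (fun y : E ↦ ‖y‖ ^ 2) x = 2 * Module.finrank ℝ E := by
  have hderiv₂ : fderiv ℝ (fderiv ℝ fun y : E ↦ ‖y‖ ^ 2) x = 2 • innerSL ℝ := by
    rw [fderiv_norm_sq]
    exact (2 • innerSL ℝ (E := E)).fderiv
  simp [laplacian_eq_sum_fderiv_fderiv (stdOrthonormalBasis ℝ E), hderiv₂, innerSL_apply_apply ℝ,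
    mul_comm]

theorem le_of_laplacian_nonneg_of_le_on_diff [Nontrivial E] {f : E → ℝ} {K U : Set E} {c : ℝ}
    (hK : IsCompact K) (hU : IsOpen U) (hUK : U ⊆ K) (hf : ContinuousOn f K)
    (hf₂ : ∀ x ∈ U, ContDiffAt ℝ 2 f x) (hΔ : ∀ x ∈ U, 0 ≤ Δ f x)
    (hc : ∀ x ∈ K \ U, f x ≤ c) {x : E} (hx : x ∈ K) : f x ≤ c := by
  by_contra! hcx
  obtain ⟨R, hR⟩ := hK.isBounded.exists_norm_le
  -- A small multiple of `‖·‖ ^ 2` makes the Laplacian positive.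
  obtain ⟨δ, hδ, hRδ⟩ := exists_pos_mul_lt (sub_pos.2 hcx) (R ^ 2)
  obtain ⟨p, hpU, hp⟩ : ∃ p ∈ U, IsLocalMax (f + δ • fun y ↦ ‖y‖ ^ 2) p := by
    refine hK.exists_isLocalMax_mem_open hUK (hf.add (by fun_prop)) hx (fun y hy ↦ ?_) hU
    have hyR : ‖y‖ ^ 2 ≤ R ^ 2 := by gcongr; exact hR y hy.1
    calc f y + δ * ‖y‖ ^ 2 ≤ c + δ * R ^ 2 := by gcongr; exact hc y hy
      _ < f x := by linarith
      _ ≤ f x + δ * ‖x‖ ^ 2 := le_add_of_nonneg_right (by positivity)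
  have hnorm : ContDiffAt ℝ 2 (fun y : E ↦ ‖y‖ ^ 2) p := (contDiff_norm_sq ℝ).contDiffAt
  have hsmul : ContDiffAt ℝ 2 (δ • fun y : E ↦ ‖y‖ ^ 2) p := hnorm.const_smul δ
  have hle : Δ (f + δ • fun y ↦ ‖y‖ ^ 2 : E → ℝ) p ≤ 0 :=
    laplacian_nonpos_of_isLocalMax ((hf₂ p hpU).add hsmul) hp
  rw [(hf₂ p hpU).laplacian_add hsmul, laplacian_smul δ hnorm, laplacian_norm_sq] at hle
  have hdim : 0 < (Module.finrank ℝ E : ℝ) := mod_cast Module.finrank_pos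
  have hpos : 0 < δ • (2 * (Module.finrank ℝ E : ℝ)) := by positivity
  linarith [hΔ p hpU]

end MaximumPrinciple

section Liouville

variable {u : ℂ → ℝ} {z₀ : ℂ} {r c M : ℝ}

lemma harmonicAt_log_norm_sub {w : ℂ} (hw : w ≠ z₀) :
    HarmonicAt (fun x ↦ Real.log ‖x - z₀‖) w :=
  AnalyticAt.harmonicAt_log_norm (f := fun x ↦ x - z₀) (by fun_prop) (sub_ne_zero.2 hw)

lemma le_add_mul_log_of_le_on_sphere (hr : 0 < r) (hu : ContinuousOn u (ball z₀ r)ᶜ)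
    (hu₂ : ∀ z ∈ (closedBall z₀ r)ᶜ, ContDiffAt ℝ 2 u z)
    (hΔ : ∀ z ∈ (closedBall z₀ r)ᶜ, 0 ≤ Δ u z) (hM : ∀ z ∈ (closedBall z₀ r)ᶜ, u z ≤ M)
    (hc : ∀ z ∈ sphere z₀ r, u z ≤ c) {z : ℂ} (hz : z ∈ (ball z₀ r)ᶜ) {ε : ℝ} (hε : 0 < ε) :
    u z ≤ c + ε * (Real.log ‖z - z₀‖ - Real.log r) := by
  let logDist : ℂ → ℝ := fun w ↦ Real.log ‖w - z₀‖
  have hharm {w : ℂ} (hw : w ∈ (ball z₀ r)ᶜ) : HarmonicAt logDist w :=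
    harmonicAt_log_norm_sub fun h ↦ hw (h ▸ mem_ball_self hr)
  have hlog₂ {w : ℂ} (hw : w ∈ (closedBall z₀ r)ᶜ) : ContDiffAt ℝ 2 logDist w :=
    (hharm (Set.compl_subset_compl.2 ball_subset_closedBall hw)).1
  obtain ⟨R, hRM, hRz⟩ : ∃ R, (M - c) / ε + Real.log r ≤ Real.log R ∧ dist z z₀ ≤ R :=
    ((Real.tendsto_log_atTop.eventually_ge_atTop _).and
      (eventually_ge_atTop _)).exists
  have hle : (u - ε • logDist) z ≤ c - ε * Real.log r := by
    refine le_of_laplacian_nonneg_of_le_on_diff (K := closedBall z₀ R \ ball z₀ r)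
      (U := ball z₀ R \ closedBall z₀ r) ((isCompact_closedBall z₀ R).diff isOpen_ball)
      (isOpen_ball.sdiff isClosed_closedBall)
      (Set.sdiff_subset_sdiff ball_subset_closedBall ball_subset_closedBall) ?_ ?_ ?_ ?_ ⟨hRz, hz⟩
    · exact (hu.mono fun w hw ↦ hw.2).sub <| ContinuousOn.const_smul
        (fun w hw ↦ (hharm hw.2).1.continuousAt.continuousWithinAt) ε
    · exact fun w hw ↦ (hu₂ w hw.2).sub ((hlog₂ hw.2).const_smul ε)
    · intro w hw
      have hsmul : ContDiffAt ℝ 2 (ε • logDist) w := (hlog₂ hw.2).const_smul ε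
      rw [(hu₂ w hw.2).laplacian_sub hsmul, laplacian_smul ε (hlog₂ hw.2),
        (hharm fun h ↦ hw.2 (ball_subset_closedBall h)).2.self_of_nhds]
      simpa using hΔ w hw.2
    · rintro w ⟨⟨hwR, hwr⟩, hwU⟩
      simp only [Pi.sub_apply, Pi.smul_apply, smul_eq_mul, logDist, ← dist_eq_norm]
      by_cases hw : w ∈ closedBall z₀ r
      · have hwr : dist w z₀ = r := le_antisymm hw (not_lt.1 hwr)
        rw [hwr]
        linarith [hc w hwr]
      · have hwR : dist w z₀ = R := le_antisymm hwR (not_lt.1 fun h ↦ hwU ⟨h, hw⟩)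
        have hRM' : M - c ≤ (Real.log R - Real.log r) * ε :=
          (div_le_iff₀ hε).1 (le_sub_iff_add_le.2 hRM)
        rw [hwR]
        linarith [hM w hw]
  simp only [Pi.sub_apply, Pi.smul_apply, smul_eq_mul, logDist] at hle
  linarith

theorem le_of_le_on_sphere (hr : 0 < r) (hu : ContinuousOn u (ball z₀ r)ᶜ)
    (hu₂ : ∀ z ∈ (closedBall z₀ r)ᶜ, ContDiffAt ℝ 2 u z)
    (hΔ : ∀ z ∈ (closedBall z₀ r)ᶜ, 0 ≤ Δ u z) (hM : ∀ z ∈ (closedBall z₀ r)ᶜ, u z ≤ M)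
    (hc : ∀ z ∈ sphere z₀ r, u z ≤ c) {z : ℂ} (hz : z ∈ (ball z₀ r)ᶜ) : u z ≤ c := by
  have hlim : Tendsto (fun ε : ℝ ↦ c + ε * (Real.log ‖z - z₀‖ - Real.log r)) (𝓝[>] 0) (𝓝 c) :=
    (Continuous.tendsto' (by fun_prop) 0 c (by simp)).mono_left nhdsWithin_le_nhds
  exact ge_of_tendsto hlim <| eventually_mem_nhdsWithin.mono fun ε hε ↦
    le_add_mul_log_of_le_on_sphere hr hu hu₂ hΔ hM hc hz hε

theorem eq_of_laplacian_nonneg_of_forall_le (hu : ContDiff ℝ 2 u) (hΔ : ∀ z, 0 ≤ Δ u z)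
    (hM : ∀ z, u z ≤ M) (z w : ℂ) : u z = u w := by
  suffices h : ∀ z w, u z ≤ u w from le_antisymm (h z w) (h w z)
  refine fun z w ↦ le_of_forall_gt_imp_ge_of_dense fun c hc ↦ ?_
  obtain ⟨r, hr, hball⟩ : ∃ r > 0, closedBall w r ⊆ {x | u x < c} :=
    nhds_basis_closedBall.mem_iff.1 (hu.continuous.continuousAt.eventually_lt_const hc)
  by_cases hz : z ∈ ball w r
  · exact (hball (ball_subset_closedBall hz)).le
  · exact le_of_le_on_sphere hr hu.continuous.continuousOn (fun x _ ↦ hu.contDiffAt)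
      (fun x _ ↦ hΔ x) (fun x _ ↦ hM x) (fun x hx ↦ (hball (sphere_subset_closedBall hx)).le) hz

end Liouville

section Mollification

lemma fderiv_comp_const_sub {𝕜 E F : Type*} [NontriviallyNormedField 𝕜] [NormedAddCommGroup E]
    [NormedSpace 𝕜 E] [NormedAddCommGroup F] [NormedSpace 𝕜 F] (f : E → F) (a x : E) :
    fderiv 𝕜 (fun y ↦ f (a - y)) x = -fderiv 𝕜 f (a - x) := by
  have h := (ContinuousLinearEquiv.neg 𝕜).comp_right_fderiv (f := fun y ↦ f (a + y)) (x := x)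
  ext v
  simpa [fderiv_comp_add_left, Function.comp_def, sub_eq_add_neg] using DFunLike.congr_fun h v

variable {E F F' G : Type*} [NormedAddCommGroup E] [InnerProductSpace ℝ E]
  [FiniteDimensional ℝ E] [NormedAddCommGroup F] [NormedSpace ℝ F] [NormedAddCommGroup F']
  [NormedSpace ℝ F'] [NormedAddCommGroup G] [NormedSpace ℝ G]

lemma laplacian_comp_const_sub (f : E → F) (a x : E) :
    Δ (fun y ↦ f (a - y)) x = Δ f (a - x) := by
  simp [laplacian_eq_sum_fderiv_fderiv (stdOrthonormalBasis ℝ E),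
    funext (fderiv_comp_const_sub (𝕜 := ℝ) f a), fderiv_fun_neg, fderiv_comp_const_sub]

variable [MeasurableSpace E] [BorelSpace E]

lemma laplacian_convolution_right {μ : Measure E} [SFinite μ] [μ.IsAddLeftInvariant]
    (L : F →L[ℝ] F' →L[ℝ] G) {f : E → F} {g : E → F'} (hf : LocallyIntegrable f μ)
    (hg : ContDiff ℝ 2 g) (hgs : HasCompactSupport g) :
    Δ (f ⋆[L, μ] g) = f ⋆[L, μ] Δ g := by
  have hg₁ : ContDiff ℝ 1 g := hg.of_le one_le_two
  have hg' : ContDiff ℝ 1 (fderiv ℝ g) := hg.fderiv_right le_rfl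
  have hgs' : HasCompactSupport (fderiv ℝ g) := hgs.fderiv ℝ
  have hderiv : fderiv ℝ (f ⋆[L, μ] g) = f ⋆[L.precompR E, μ] fderiv ℝ g :=
    funext fun x ↦ (hgs.hasFDerivAt_convolution_right L hf hg₁ x).fderiv
  have hderiv₂ (x v : E) : fderiv ℝ (fderiv ℝ (f ⋆[L, μ] g)) x v v =
      (f ⋆[L, μ] fun y ↦ fderiv ℝ (fderiv ℝ g) y v v) x := by
    rw [hderiv, (hgs'.hasFDerivAt_convolution_right (L.precompR E) hf hg' x).fderiv,
      convolution_precompR_apply _ hf (hgs'.fderiv ℝ) (hg'.continuous_fderiv one_ne_zero),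
      convolution_precompR_apply L hf (hgs'.fderiv_apply ℝ v)
        ((hg'.continuous_fderiv one_ne_zero).clm_apply continuous_const)]
  ext x
  let b := stdOrthonormalBasis ℝ E
  have hconv (v : E) : ConvolutionExistsAt f (fun y ↦ fderiv ℝ (fderiv ℝ g) y v v) x L μ :=
    HasCompactSupport.convolutionExists_right L
      ((hgs'.fderiv_apply ℝ v).comp_left (g := fun A : E →L[ℝ] F' ↦ A v) rfl) hf
      (((hg'.continuous_fderiv one_ne_zero).clm_apply continuous_const).clm_apply
        continuous_const) x
  simp_rw [laplacian_eq_sum_fderiv_fderiv b, hderiv₂, convolution_def]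
  rw [← integral_finsetSum _ fun i _ ↦ hconv (b i)]
  simp only [laplacian_eq_sum_fderiv_fderiv b, map_sum]

lemma convolution_le_of_ae_le {G : Type*} [AddGroup G] [MeasurableSpace G] [MeasurableAdd G]
    [MeasurableNeg G] {μ : Measure G} [μ.IsAddLeftInvariant] [μ.IsNegInvariant] {f ρ : G → ℝ}
    {M : ℝ} {x : G} (hconv : ConvolutionExistsAt f ρ x (lsmul ℝ ℝ) μ) (hf : ∀ᵐ t ∂μ, f t ≤ M)
    (hρ0 : ∀ t, 0 ≤ ρ t) (hρ1 : ∫ t, ρ t ∂μ = 1) : (f ⋆[lsmul ℝ ℝ, μ] ρ) x ≤ M := by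
  have hρ : Integrable ρ μ := integrable_of_integral_eq_one hρ1
  calc ∫ t, f t * ρ (x - t) ∂μ
      ≤ ∫ t, M * ρ (x - t) ∂μ :=
        integral_mono_ae hconv.integrable ((hρ.comp_sub_left x).const_mul M) <|
          hf.mono fun t ht ↦ mul_le_mul_of_nonneg_right ht (hρ0 _)
    _ = M := by rw [integral_const_mul, integral_sub_left_eq_self ρ μ x, hρ1, mul_one]

lemma ae_eq_const_of_convolution_normed_const {E F : Type*} [NormedAddCommGroup E]
    [NormedSpace ℝ E] [FiniteDimensional ℝ E] [MeasurableSpace E] [BorelSpace E]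
    [NormedAddCommGroup F] [NormedSpace ℝ F] [CompleteSpace F] {μ : Measure E}
    [μ.IsAddHaarMeasure] {f : E → F} (hf : LocallyIntegrable f μ)
    (hconst : ∀ (ρ : ContDiffBump (0 : E)) (x y : E),
      (ρ.normed μ ⋆[lsmul ℝ ℝ, μ] f) x = (ρ.normed μ ⋆[lsmul ℝ ℝ, μ] f) y) :
    ∃ c, f =ᵐ[μ] fun _ ↦ c := by
  let ρ (n : ℕ) : ContDiffBump (0 : E) :=
    ⟨1 / (n + 1) / 2, 1 / (n + 1), by positivity, half_lt_self (by positivity)⟩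
  have hlim : ∀ᵐ x ∂μ, Tendsto (fun n ↦ ((ρ n).normed μ ⋆[lsmul ℝ ℝ, μ] f) x) atTop (𝓝 (f x)) :=
    ContDiffBump.ae_convolution_tendsto_right_of_locallyIntegrable (K := 2)
      tendsto_one_div_add_atTop_nhds_zero_nat
      (.of_forall fun n ↦ (mul_div_cancel₀ _ two_ne_zero).ge) hf
  obtain ⟨x₀, hx₀⟩ := hlim.exists
  exact ⟨f x₀, hlim.mono fun x hx ↦
    tendsto_nhds_unique (hx.congr fun n ↦ hconst (ρ n) x x₀) hx₀⟩

end Mollification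

/-- A function on a Euclidean space is weakly subharmonic if its distributional Laplacian is
nonnegative, i.e. nonnegative when tested against every nonnegative test function. It is meant for
locally integrable functions: otherwise the integral may take its junk value `0`. -/
def IsWeaklySubharmonic {E : Type*} [NormedAddCommGroup E] [InnerProductSpace ℝ E]
    [FiniteDimensional ℝ E] [MeasurableSpace E] [BorelSpace E] (f : E → ℝ) : Prop :=
  ∀ φ : E → ℝ, ContDiff ℝ ∞ φ → HasCompactSupport φ → (∀ x, 0 ≤ φ x) → 0 ≤ ∫ x, f x * Δ φ x

namespace IsWeaklySubharmonic

lemma laplacian_convolution_nonneg {E : Type*} [NormedAddCommGroup E] [InnerProductSpace ℝ E]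
    [FiniteDimensional ℝ E] [MeasurableSpace E] [BorelSpace E] {f ρ : E → ℝ}
    (hf : IsWeaklySubharmonic f) (hfi : LocallyIntegrable f) (hρ : ContDiff ℝ ∞ ρ)
    (hρs : HasCompactSupport ρ) (hρ0 : ∀ x, 0 ≤ ρ x) (x : E) :
    0 ≤ Δ (f ⋆[lsmul ℝ ℝ] ρ : E → ℝ) x := by
  have htest : 0 ≤ ∫ t, f t * Δ (fun y ↦ ρ (x - y)) t :=
    hf _ (hρ.comp (contDiff_const.sub contDiff_id))
      (hρs.comp_homeomorph (Homeomorph.subLeft x)) fun y ↦ hρ0 (x - y)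
  rw [laplacian_convolution_right _ hfi (contDiff_infty.1 hρ 2) hρs,
    convolution_lsmul]
  simpa only [smul_eq_mul, laplacian_comp_const_sub] using htest

theorem ae_eq_const {ψ : ℂ → ℝ} {M : ℝ} (hψ : IsWeaklySubharmonic ψ) (hψi : LocallyIntegrable ψ)
    (hM : ∀ᵐ z, ψ z ≤ M) : ∃ c, ψ =ᵐ[volume] fun _ ↦ c := by
  refine ae_eq_const_of_convolution_normed_const hψi fun ρ ↦ ?_
  have hρ : ContDiff ℝ ∞ (ρ.normed volume) := ρ.contDiff_normed
  have hρs : HasCompactSupport (ρ.normed volume) := ρ.hasCompactSupport_normed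
  have hcomm : ρ.normed volume ⋆[lsmul ℝ ℝ] ψ = ψ ⋆[lsmul ℝ ℝ] ρ.normed volume := by
    ext z
    rw [convolution_lsmul, convolution_lsmul_swap]
    simp only [smul_eq_mul, mul_comm]
  rw [hcomm]
  refine eq_of_laplacian_nonneg_of_forall_le (M := M)
    (hρs.contDiff_convolution_right _ hψi (contDiff_infty.1 hρ 2))
    (hψ.laplacian_convolution_nonneg hψi hρ hρs ρ.nonneg_normed) fun z ↦ ?_
  exact convolution_le_of_ae_le (hρs.convolutionExists_right _ hψi hρ.continuous z) hM
    ρ.nonneg_normed ρ.integral_normed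

end IsWeaklySubharmonic

lemma laplacianC_eq_laplacian {φ : ℂ → ℝ} {z : ℂ} (hφ : ContDiffAt ℝ 2 φ z) :
    laplacianC φ z = Δ φ z := by
  have hφ' : DifferentiableAt ℝ (fderiv ℝ φ) z :=
    (hφ.fderiv_right (m := 1) le_rfl).differentiableAt one_ne_zero
  simp [laplacianC, fderiv_fderiv_apply_const hφ', laplacian_eq_iteratedFDeriv_complexPlane,
    iteratedFDeriv_two_apply]

theorem bounded_weakly_subharmonic_const_general (ψ : ℂ → ℝ) (hbdd : ∃ M : ℝ, ∀ᵐ z, ψ z ≤ M)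
    (hint : LocallyIntegrable ψ)
    (hsub : ∀ φ : ℂ → ℝ, ContDiff ℝ (⊤ : ℕ∞) φ → HasCompactSupport φ → (∀ z, 0 ≤ φ z) →
      0 ≤ ∫ z : ℂ, ψ z * laplacianC φ z) :
    ∃ c, ψ =ᵐ[volume] fun _ ↦ c := by
  obtain ⟨M, hM⟩ := hbdd
  have hψ : IsWeaklySubharmonic ψ := fun φ hφ hφs hφ0 ↦ by
    have hφ₂ : ContDiff ℝ 2 φ := contDiff_infty.1 hφ 2
    simpa only [laplacianC_eq_laplacian hφ₂.contDiffAt] using hsub φ hφ hφs hφ0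
  exact hψ.ae_eq_const hint hM

/-- Any bounded continuous weakly subharmonic function on the plane `ℂ ≅ ℝ²` is constant. -/
theorem bounded_weakly_subharmonic_const (ψ : ℂ → ℝ)
    (hbdd : ∃ M : ℝ, ∀ z : ℂ, |ψ z| ≤ M)
    (hcont : Continuous ψ)
    (hsub : ∀ φ : ℂ → ℝ, ContDiff ℝ (⊤ : ℕ∞) φ → HasCompactSupport φ → (∀ z, 0 ≤ φ z) →
      0 ≤ ∫ z : ℂ, ψ z * laplacianC φ z) :
    ∀ z w : ℂ, ψ z = ψ w := by
  obtain ⟨c, hc⟩ := bounded_weakly_subharmonic_const_general ψ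
    (hbdd.imp fun _ hM ↦ .of_forall fun z ↦ (le_abs_self _).trans (hM z))
    hcont.locallyIntegrable hsub
  simp [(hcont.ae_eq_iff_eq volume continuous_const).1 hc]
end

section
/- Let (Ω, μ) be a measure space, let Y, u : Ω → ℝ be measurable with u ≥ 0 everywhere, and for each k ≥ 0 define X_k := Y · Σ_{i=0}^k u^i/i!. Then for all k ≤ m, ∫ X_k² dμ + ∫ (X_m − X_k)² dμ ≤ ∫ X_m² dμ (as integrals with values in the extended nonnegative reals). (This is the key inequality in Section 6.2 showing that the truncations X_{,k} of X = Y·e^u form a Cauchy sequence in L².) -/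
open MeasureTheory Finset

section OrderedRing

variable {R : Type*} [CommRing R]

lemma sq_add_sub_sq_le_sq [PartialOrder R] [IsOrderedAddMonoid R] {a b : R}
    (h : 0 ≤ a * (b - a)) : a ^ 2 + (b - a) ^ 2 ≤ b ^ 2 :=
  calc
    a ^ 2 + (b - a) ^ 2 ≤ a ^ 2 + (b - a) ^ 2 + (a * (b - a) + a * (b - a)) :=
      le_add_of_nonneg_right (add_nonneg h h)
    _ = b ^ 2 := by ring

lemma mul_mul_mul_sub_mul_nonneg [LinearOrder R] [IsOrderedRing R] (y : R) {a b : R}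
    (ha : 0 ≤ a) (hab : a ≤ b) : 0 ≤ y * a * (y * b - y * a) :=
  calc
    0 ≤ y ^ 2 * (a * (b - a)) := mul_nonneg (sq_nonneg y) (mul_nonneg ha (sub_nonneg.2 hab))
    _ = y * a * (y * b - y * a) := by ring

end OrderedRing

section LIntegral

variable {Ω : Type*} [MeasurableSpace Ω] (μ : Measure Ω)

lemma lintegral_sq_add_lintegral_sub_sq_le {f g : Ω → ℝ}
    (h : ∀ᵐ x ∂μ, 0 ≤ f x * (g x - f x)) :
    ∫⁻ x, ENNReal.ofReal (f x ^ 2) ∂μ + ∫⁻ x, ENNReal.ofReal ((g x - f x) ^ 2) ∂μ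
      ≤ ∫⁻ x, ENNReal.ofReal (g x ^ 2) ∂μ := by
  -- `∫⁻` is a supremum over simple minorants, hence superadditive on arbitrary functions.
  refine (le_lintegral_add _ _).trans (lintegral_mono_ae ?_)
  filter_upwards [h] with x hx
  rw [← ENNReal.ofReal_add (sq_nonneg _) (sq_nonneg _)]
  exact ENNReal.ofReal_le_ofReal (sq_add_sub_sq_le_sq hx)

theorem truncation_square_inequality_general (Y : Ω → ℝ) (a : ℕ → Ω → ℝ)
    (ha : ∀ i, ∀ᵐ x ∂μ, 0 ≤ a i x) (X : ℕ → Ω → ℝ)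
    (hX : ∀ k x, X k x = Y x * ∑ i ∈ range (k + 1), a i x) {k m : ℕ} (hkm : k ≤ m) :
    ∫⁻ x, ENNReal.ofReal (X k x ^ 2) ∂μ + ∫⁻ x, ENNReal.ofReal ((X m x - X k x) ^ 2) ∂μ
      ≤ ∫⁻ x, ENNReal.ofReal (X m x ^ 2) ∂μ := by
  apply lintegral_sq_add_lintegral_sub_sq_le
  filter_upwards [ae_all_iff.2 ha] with x hx
  have partialSum_nonneg : 0 ≤ ∑ i ∈ range (k + 1), a i x := Finset.sum_nonneg fun i _ ↦ hx i
  have partialSum_le : ∑ i ∈ range (k + 1), a i x ≤ ∑ i ∈ range (m + 1), a i x :=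
    sum_le_sum_of_subset_of_nonneg (range_mono (Nat.succ_le_succ hkm)) fun i _ _ ↦ hx i
  rw [hX k x, hX m x]
  exact mul_mul_mul_sub_mul_nonneg (Y x) partialSum_nonneg partialSum_le

end LIntegral

/-- Key inequality of Section 6.2: for `u ≥ 0` and the truncations
`X_k = Y · Σ_{i=0}^k uⁱ/i!`, one has `∫ X_k² + ∫ (X_m − X_k)² ≤ ∫ X_m²` for `k ≤ m`,
as integrals valued in the extended nonnegative reals. -/
theorem truncation_square_inequality {Ω : Type*} [MeasurableSpace Ω] (μ : Measure Ω)
    (Y u : Ω → ℝ) (hY : Measurable Y) (hu : Measurable u) (hu0 : ∀ x, 0 ≤ u x)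
    (X : ℕ → Ω → ℝ)
    (hX : ∀ k x, X k x = Y x * ∑ i ∈ Finset.range (k + 1), u x ^ i / (Nat.factorial i))
    (k m : ℕ) (hkm : k ≤ m) :
    ∫⁻ x, ENNReal.ofReal ((X k x) ^ 2) ∂μ +
        ∫⁻ x, ENNReal.ofReal ((X m x - X k x) ^ 2) ∂μ
      ≤ ∫⁻ x, ENNReal.ofReal ((X m x) ^ 2) ∂μ :=
  truncation_square_inequality_general μ Y (fun i x ↦ u x ^ i / i.factorial)
    (fun i ↦ ae_of_all μ fun x ↦ div_nonneg (pow_nonneg (hu0 x) i) (Nat.cast_nonneg _)) X hX hkm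
end
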